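/- Let k be a positive integer with at least 2828 distinct prime factors. Then the number of squarefree divisors of k satisfies W(k) < k^{1/13}. -/

import Mathlib

/-- Trial-division test, true for all primes up to `25673`. -/
def sieveOk (n : ℕ) : Bool :=
  Nat.ble n 25673 && (Nat.beq (Nat.gcd 35375166993717494840635767087951744212057570647889977422429870 n) 1 ||
    (Nat.ble n 160 && (Nat.beq (Nat.gcd 2310 n) 1 ||
      (Nat.beq n 2 || Nat.beq n 3 || Nat.beq n 5 || Nat.beq n 7 || Nat.beq n 11))))

/-- Product of the numbers passing the test in `[a, a + 2 ^ d)`, by binary splitting. -/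
def sieveProd : ℕ → ℕ → ℕ
  | 0, a => bif sieveOk a then a else 1
  | d + 1, a => sieveProd d a * sieveProd d (a + 2 ^ d)

/-- Number of the numbers passing the test in `[a, a + 2 ^ d)`, by binary splitting. -/
def sieveCount : ℕ → ℕ → ℕ
  | 0, a => bif sieveOk a then 1 else 0
  | d + 1, a => sieveCount d a + sieveCount d (a + 2 ^ d)

theorem sieveCount_val : sieveCount 15 2 = 2828 := by decide +kernel

theorem sieveProd_val : 2 ^ (13 * 2828) < sieveProd 15 2 := by decide +kernel

theorem sieveProd_eq (d a : ℕ) :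
    sieveProd d a = ∏ n ∈ (Finset.Ico a (a + 2 ^ d)).filter (fun n => sieveOk n = true), n := by
  rw [Finset.prod_filter]
  induction d generalizing a with
  | zero => cases h : sieveOk a <;> simp [sieveProd, h]
  | succ d ih =>
    rw [sieveProd, ih, ih, Finset.prod_Ico_consecutive _ (Nat.le_add_right _ _) (Nat.le_add_right _ _)]
    congr 2
    ring

theorem sieveCount_eq (d a : ℕ) :
    sieveCount d a = ((Finset.Ico a (a + 2 ^ d)).filter (fun n => sieveOk n = true)).card := by
  rw [Finset.card_filter]
  induction d generalizing a with
  | zero => cases h : sieveOk a <;> simp [sieveCount, h, Finset.filter_singleton]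
  | succ d ih =>
    rw [sieveCount, ih, ih, Finset.sum_Ico_consecutive _ (Nat.le_add_right _ _) (Nat.le_add_right _ _)]
    congr 2
    ring

theorem sieveOk_le {n : ℕ} (h : sieveOk n = true) : n ≤ 25673 := by
  unfold sieveOk at h
  rw [Bool.and_eq_true] at h
  exact Nat.le_of_ble_eq_true h.1

theorem sieveOk_of_small : ∀ n < 161, n.Prime → sieveOk n = true := by decide +kernel

theorem sieveOk_of_prime {n : ℕ} (hn : n.Prime) (h : n ≤ 25673) : sieveOk n = true := by
  rcases lt_or_ge n 161 with h1 | h1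
  · exact sieveOk_of_small n h1 hn
  have hP : 35375166993717494840635767087951744212057570647889977422429870 = ([2, 3, 5, 7, 11, 13, 17, 19, 23, 29, 31, 37, 41, 43, 47, 53, 59, 61, 67, 71, 73, 79, 83, 89, 97, 101, 103, 107, 109, 113, 127, 131, 137, 139, 149, 151, 157] : List ℕ).prod := by
    decide +kernel
  have hc : Nat.gcd 35375166993717494840635767087951744212057570647889977422429870 n = 1 := by
    rw [Nat.gcd_comm]
    refine (Nat.Prime.coprime_iff_not_dvd hn).2 fun hd => ?_
    rw [hP, hn.prime.dvd_prod_iff] at hd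
    obtain ⟨a, ha, hda⟩ := hd
    have : ∀ a ∈ ([2, 3, 5, 7, 11, 13, 17, 19, 23, 29, 31, 37, 41, 43, 47, 53, 59, 61, 67, 71, 73, 79, 83, 89, 97, 101, 103, 107, 109, 113, 127, 131, 137, 139, 149, 151, 157] : List ℕ), 0 < a ∧ a < 161 := by
      decide +kernel
    have h2 := this a ha
    have := Nat.le_of_dvd h2.1 hda
    omega
  unfold sieveOk
  rw [hc, Nat.ble_eq_true_of_le h]
  rfl

theorem prod_primes_gt (S : Finset ℕ) (hS : ∀ p ∈ S, p.Prime) (hc : 2828 ≤ S.card) :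
    2 ^ (13 * S.card) < ∏ p ∈ S, p := by
  set T := (Finset.Ico 2 (2 + 2 ^ 15)).filter (fun n => sieveOk n = true) with hT
  have hTc : T.card = 2828 := by rw [hT, ← sieveCount_eq, sieveCount_val]
  have hTp : 2 ^ (13 * 2828) < ∏ p ∈ T, p := by rw [hT, ← sieveProd_eq]; exact sieveProd_val
  have h1 : 25673 ^ (S \ T).card ≤ ∏ p ∈ S \ T, p := by
    refine Finset.pow_card_le_prod _ _ _ fun p hp => ?_
    rw [Finset.mem_sdiff] at hp
    by_contra hlt
    push Not at hlt
    apply hp.2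
    have hpp := hS p hp.1
    rw [hT, Finset.mem_filter, Finset.mem_Ico]
    exact ⟨⟨hpp.two_le, by omega⟩, sieveOk_of_prime hpp hlt.le⟩
  have h2 : ∏ p ∈ T \ S, p ≤ 25673 ^ (T \ S).card := by
    refine Finset.prod_le_pow_card _ _ _ fun p hp => ?_
    rw [Finset.mem_sdiff, hT, Finset.mem_filter] at hp
    exact sieveOk_le hp.1.2
  have e1 := Finset.card_sdiff_add_card_inter S T
  have e2 := Finset.card_sdiff_add_card_inter T S
  rw [Finset.inter_comm T S] at e2
  have e3 : (S \ T).card = (T \ S).card + (S.card - 2828) := by omega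
  have p1 : (∏ p ∈ S ∩ T, p) * ∏ p ∈ S \ T, p = ∏ p ∈ S, p :=
    Finset.prod_inter_mul_prod_sdiff S T _
  have p2 : (∏ p ∈ S ∩ T, p) * ∏ p ∈ T \ S, p = ∏ p ∈ T, p := by
    rw [Finset.inter_comm]
    exact Finset.prod_inter_mul_prod_sdiff T S _
  have e4 : 13 * S.card = 13 * 2828 + 13 * (S.card - 2828) := by omega
  generalize S.card - 2828 = m at e3 e4
  calc 2 ^ (13 * S.card) = 2 ^ (13 * 2828) * (2 ^ 13) ^ m := by rw [e4, pow_add, pow_mul 2 13 m]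
    _ < (∏ p ∈ T, p) * (2 ^ 13) ^ m := Nat.mul_lt_mul_of_pos_right hTp (by positivity)
    _ ≤ (∏ p ∈ T, p) * 25673 ^ m := by gcongr; norm_num
    _ = (∏ p ∈ S ∩ T, p) * (∏ p ∈ T \ S, p) * 25673 ^ m := by rw [p2]
    _ ≤ (∏ p ∈ S ∩ T, p) * 25673 ^ (T \ S).card * 25673 ^ m := by gcongr
    _ = (∏ p ∈ S ∩ T, p) * 25673 ^ (S \ T).card := by rw [e3, pow_add, mul_assoc]
    _ ≤ (∏ p ∈ S ∩ T, p) * ∏ p ∈ S \ T, p := by gcongr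
    _ = ∏ p ∈ S, p := p1

/-- If `k` has at least `2828` distinct prime factors, then the number of squarefree divisors
`W(k) = 2^{ω(k)}` satisfies `W(k) < k^{1/13}`. -/
theorem squarefree_divisor_count_lt_of_many_primes (k : ℕ) (hk : 0 < k)
    (hω : 2828 ≤ k.primeFactors.card) :
    (2 : ℝ) ^ k.primeFactors.card < (k : ℝ) ^ ((1 : ℝ) / 13) := by
  have h1 := prod_primes_gt k.primeFactors (fun p hp => Nat.prime_of_mem_primeFactors hp) hω
  have h2 := Nat.le_of_dvd hk (Nat.prod_primeFactors_dvd k)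
  have h3 : 2 ^ (13 * k.primeFactors.card) < k := lt_of_lt_of_le h1 h2
  generalize k.primeFactors.card = n at h3
  have h4 : ((2 : ℝ) ^ n) ^ 13 < k := by
    rw [← pow_mul, mul_comm]
    exact_mod_cast h3
  have h5 : ((k : ℝ) ^ ((1 : ℝ) / 13)) ^ 13 = k := by
    rw [← Real.rpow_natCast, ← Real.rpow_mul (by positivity)]
    norm_num
  rw [← h5] at h4
  exact lt_of_pow_lt_pow_left₀ 13 (by positivity) h4
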